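/- arXiv:1404.1941 — 2 statements merged into one kernel-verified Lean document; each statement's English description precedes it below -/
import Mathlib

section
/- Let ψ be the Morlet wavelet ψ(t)=e^{iu₀t−t²/2} with u₀∈ℝ, so that ψ̂(u)=√(2π) e^{−(u−u₀)²/2}, and set c_s = √(2π) e^{−u₀²/2} Σ_{p=0}^{⌊s/2⌋} (−1)^p u₀^{s−2p} / (p! (s−2p)! 2^p) for s≥0. Fix b∈ℝ, b≠0, let f∈L¹(ℝ)∩L²(ℝ), and set h(u)=e^{ibu} f̂(u). Assume h(u)=O(|u|^ρ) as u→0 for some ρ>−1, and that there exist β>0 and complex coefficients b_r^± such that for every N∈ℕ, h(u)−e^{ibu}Σ_{r=0}^{N−1} b_r^+ u^{−r−β}=O(u^{−N−β}) and h(−u)−e^{−ibu}Σ_{r=0}^{N−1} b_r^− u^{−r−β}=O(u^{−N−β}) as u→+∞. Then for every n≥1 the generalized Mellin transforms M[h₊;s+1] and M[h₋;s+1] exist for s=0,…,n−1 (where h₊(u)=h(u), h₋(u)=h(−u) for u>0), the limits defining δ_n(a) below exist, and for every a>0: (W_ψf)(b,a) = (1/2π)·{ Σ_{s=0}^{n−1}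 c_s ( M[h₊;s+1] + (−1)^s M[h₋;s+1] ) a^{s+1/2} + δ_n(a) }, where δ_n(a) = a^{−1/2} lim_{ε→0+} [ ∫_0^∞ ψ̂_n(u) h(u/a) e^{−εu} du + ∫_0^∞ ψ̂_n(−u) h(−u/a) e^{−εu} du ] and ψ̂_n(u) := ψ̂(u) − Σ_{s=0}^{n−1} c_s u^s. -/
open MeasureTheory Filter Set Topology Asymptotics

/-- The Fourier transform `f̂(ω) = ∫ e^{−itω} f(t) dt`. -/
noncomputable def fourierInt (f : ℝ → ℂ) (ω : ℝ) : ℂ :=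
  ∫ t : ℝ, Complex.exp (-(Complex.I * t * ω)) * f t

/-- The wavelet transform `(W_ψ f)(b, a) = a^{−1/2} ∫ f(t) conj(ψ((t−b)/a)) dt`. -/
noncomputable def waveletTransform (ψ f : ℝ → ℂ) (b a : ℝ) : ℂ :=
  (((Real.sqrt a)⁻¹ : ℝ) : ℂ) * ∫ t : ℝ, f t * (starRingEnd ℂ) (ψ ((t - b) / a))

/-- The Morlet wavelet `ψ(t) = e^{i u₀ t − t²/2}`. -/
noncomputable def morlet (u₀ : ℝ) : ℝ → ℂ :=
  fun t => Complex.exp (Complex.I * u₀ * t - (t : ℂ) ^ 2 / 2)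

/-- Its Fourier transform `ψ̂(u) = √(2π) e^{−(u−u₀)²/2}`. -/
noncomputable def morletHat (u₀ : ℝ) (u : ℝ) : ℂ :=
  ((Real.sqrt (2 * Real.pi) * Real.exp (-(u - u₀) ^ 2 / 2) : ℝ) : ℂ)

/-- The Maclaurin coefficients
`c_s = √(2π) e^{−u₀²/2} Σ_{p=0}^{⌊s/2⌋} (−1)^p u₀^{s−2p} / (p!(s−2p)! 2^p)`. -/
noncomputable def morletCoeff (u₀ : ℝ) (s : ℕ) : ℂ :=
  ((Real.sqrt (2 * Real.pi) * Real.exp (-u₀ ^ 2 / 2) *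
    ∑ p ∈ Finset.range (s / 2 + 1),
      (-1 : ℝ) ^ p * u₀ ^ (s - 2 * p) /
        ((p.factorial : ℝ) * ((s - 2 * p).factorial : ℝ) * 2 ^ p) : ℝ) : ℂ)

/-- The remainder `ψ̂_n(u) = ψ̂(u) − Σ_{s=0}^{n−1} c_s u^s`. -/
noncomputable def morletHatRem (u₀ : ℝ) (n : ℕ) (u : ℝ) : ℂ :=
  morletHat u₀ u - ∑ s ∈ Finset.range n, morletCoeff u₀ s * (u : ℂ) ^ s

lemma abel_integrableOn {S : Set ℝ} (hS : MeasurableSet S) (hS0 : S ⊆ Ioi 0) {G : ℝ → ℂ}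
    (hG : IntegrableOn G S) {ε : ℝ} (hε : 0 < ε) :
    IntegrableOn (fun u => G u * ((Real.exp (-ε * u) : ℝ) : ℂ)) S := by
  refine Integrable.mono' hG.norm ?_ ?_
  · exact hG.aestronglyMeasurable.mul (by fun_prop)
  · refine (ae_restrict_iff' hS).2 (Eventually.of_forall fun u hu => ?_)
    have hu0 : 0 < u := hS0 hu
    rw [norm_mul, Complex.norm_real, Real.norm_eq_abs, abs_of_pos (Real.exp_pos _)]
    have : Real.exp (-ε * u) ≤ 1 := Real.exp_le_one_iff.2 (by nlinarith)
    nlinarith [norm_nonneg (G u)]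

lemma abel_tendsto {S : Set ℝ} (hS : MeasurableSet S) (hS0 : S ⊆ Ioi 0) {G : ℝ → ℂ}
    (hG : IntegrableOn G S) :
    Tendsto (fun ε : ℝ => ∫ u in S, G u * ((Real.exp (-ε * u) : ℝ) : ℂ))
      (𝓝[>] 0) (𝓝 (∫ u in S, G u)) := by
  refine tendsto_integral_filter_of_dominated_convergence (fun u => ‖G u‖) ?_ ?_ hG.norm ?_
  · exact Eventually.of_forall fun ε => hG.aestronglyMeasurable.mul (by fun_prop)
  · filter_upwards [self_mem_nhdsWithin] with ε hε
    have hε : 0 < ε := hε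
    refine (ae_restrict_iff' hS).2 (Eventually.of_forall fun u hu => ?_)
    have hu0 : 0 < u := hS0 hu
    rw [norm_mul, Complex.norm_real, Real.norm_eq_abs, abs_of_pos (Real.exp_pos _)]
    have : Real.exp (-ε * u) ≤ 1 := Real.exp_le_one_iff.2 (by nlinarith)
    nlinarith [norm_nonneg (G u)]
  · refine Eventually.of_forall fun u => ?_
    have : Continuous fun ε : ℝ => G u * ((Real.exp (-ε * u) : ℝ) : ℂ) := by fun_prop
    have h2 := (this.tendsto 0).mono_left (nhdsWithin_le_nhds (s := Ioi 0))
    simpa using h2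

lemma norm_cexp_I_mul (b u : ℝ) : ‖Complex.exp (Complex.I * b * u)‖ = 1 := by
  rw [Complex.norm_exp]; simp

lemma osc_integrableOn (b γ : ℝ) {ε : ℝ} (hε : 0 < ε) :
    IntegrableOn (fun u : ℝ => ((u ^ γ : ℝ) : ℂ) * Complex.exp (Complex.I * b * u) *
      ((Real.exp (-ε * u) : ℝ) : ℂ)) (Ioi 1) := by
  have h1 : IntegrableOn (fun u : ℝ => u ^ γ * Real.exp (-ε * u)) (Ioi 1) := by
    refine integrable_of_isBigO_exp_neg (b := ε / 2) (by positivity) ?_ ?_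
    · refine ContinuousOn.mul ?_ (by fun_prop)
      exact continuousOn_id.rpow_const fun x hx => Or.inl (by
        have : (1 : ℝ) ≤ x := hx
        simp; linarith)
    · have := (isLittleO_rpow_exp_pos_mul_atTop γ (half_pos hε)).isBigO.mul
        (isBigO_refl (fun u : ℝ => Real.exp (-ε * u)) atTop)
      refine this.congr_right fun u => ?_
      rw [← Real.exp_add]; congr 1; ring
  refine Integrable.mono' h1 ?_ ?_
  · refine AEStronglyMeasurable.mul (AEStronglyMeasurable.mul ?_ (by fun_prop)) (by fun_prop)
    exact (by fun_prop : Measurable fun u : ℝ => ((u ^ γ : ℝ) : ℂ)).aestronglyMeasurable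
  · refine (ae_restrict_iff' measurableSet_Ioi).2 (Eventually.of_forall fun u hu => ?_)
    have hu0 : (1 : ℝ) < u := hu
    rw [norm_mul, norm_mul, norm_cexp_I_mul, Complex.norm_real, Complex.norm_real,
      Real.norm_of_nonneg (by positivity), Real.norm_of_nonneg (by positivity), mul_one]

lemma osc_ibp (b : ℝ) (hb : b ≠ 0) (γ : ℝ) {ε : ℝ} (hε : 0 < ε) :
    (∫ u in Ioi (1 : ℝ), ((u ^ γ : ℝ) : ℂ) * Complex.exp (Complex.I * b * u) *
      ((Real.exp (-ε * u) : ℝ) : ℂ)) =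
    (-Complex.exp (Complex.I * b - ε) - γ * ∫ u in Ioi (1 : ℝ), ((u ^ (γ - 1) : ℝ) : ℂ) *
      Complex.exp (Complex.I * b * u) * ((Real.exp (-ε * u) : ℝ) : ℂ)) / (Complex.I * b - ε) := by
  have hz : Complex.I * b - ε ≠ (0 : ℂ) := by
    intro h0
    have := congrArg Complex.im h0
    simp at this
    exact hb this
  have hexp : ∀ u : ℝ, Complex.exp (Complex.I * b * u) * ((Real.exp (-ε * u) : ℝ) : ℂ)
      = Complex.exp ((Complex.I * b - ε) * u) := by
    intro u
    rw [Complex.ofReal_exp, ← Complex.exp_add]; congr 1; push_cast; ring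
  have i1 := osc_integrableOn b γ hε
  have i2 := osc_integrableOn b (γ - 1) hε
  simp only [mul_assoc] at i1 i2 ⊢
  have hexp' : ∀ u : ℝ, Complex.exp (Complex.I * (b * u)) * ((Real.exp (-ε * u) : ℝ) : ℂ)
      = Complex.exp ((Complex.I * b - ε) * u) := by
    intro u
    rw [← hexp u, mul_assoc]
  simp only [hexp'] at i1 i2 ⊢
  have key := integral_Ioi_of_hasDerivAt_of_tendsto (a := 1) (m := 0)
    (f := fun u : ℝ => ((u ^ γ : ℝ) : ℂ) * Complex.exp ((Complex.I * b - ε) * u))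
    (f' := fun u : ℝ => (γ : ℂ) * (((u ^ (γ - 1) : ℝ) : ℂ) * Complex.exp ((Complex.I * b - ε) * u))
      + (Complex.I * b - ε) * (((u ^ γ : ℝ) : ℂ) * Complex.exp ((Complex.I * b - ε) * u)))
    ?_ ?_ ((i2.const_mul _).add (i1.const_mul _)) ?_
  · rw [integral_add (i2.const_mul _) (i1.const_mul _), integral_const_mul,
      integral_const_mul] at key
    rw [eq_div_iff hz]
    simp only [Real.one_rpow, Complex.ofReal_one, one_mul, mul_one, zero_sub] at key
    linear_combination key
  · refine ContinuousAt.continuousWithinAt ?_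
    refine ContinuousAt.mul ?_ (by fun_prop)
    exact Complex.continuous_ofReal.continuousAt.comp
      (Real.continuousAt_rpow_const 1 γ (Or.inl one_ne_zero))
  · intro u hu
    have hu0 : (1 : ℝ) < u := hu
    have d1 : HasDerivAt (fun u : ℝ => ((u ^ γ : ℝ) : ℂ)) ((γ * u ^ (γ - 1) : ℝ) : ℂ) u :=
      (Real.hasDerivAt_rpow_const (Or.inl (by linarith))).ofReal_comp
    have d2 : HasDerivAt (fun u : ℝ => Complex.exp ((Complex.I * b - ε) * u))
        (Complex.exp ((Complex.I * b - ε) * u) * ((Complex.I * b - ε) * 1)) u :=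
      (((hasDerivAt_id u).ofReal_comp).const_mul _).cexp
    refine (d1.mul d2).congr_deriv ?_
    push_cast; ring
  · rw [tendsto_zero_iff_norm_tendsto_zero]
    refine (tendsto_rpow_mul_exp_neg_mul_atTop_nhds_zero γ ε hε).congr' ?_
    filter_upwards [eventually_gt_atTop 0] with u hu
    rw [norm_mul, Complex.norm_real, Real.norm_of_nonneg (by positivity), Complex.norm_exp]
    simp

lemma osc_tendsto (b : ℝ) (hb : b ≠ 0) (k : ℕ) : ∀ γ : ℝ, γ < -1 + k → ∃ L : ℂ,
    Tendsto (fun ε : ℝ => ∫ u in Ioi (1 : ℝ), ((u ^ γ : ℝ) : ℂ) *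
      Complex.exp (Complex.I * b * u) * ((Real.exp (-ε * u) : ℝ) : ℂ)) (𝓝[>] 0) (𝓝 L) := by
  induction k with
  | zero =>
    intro γ hγ
    refine ⟨_, abel_tendsto measurableSet_Ioi (Ioi_subset_Ioi zero_le_one) ?_⟩
    have h1 := integrableOn_Ioi_rpow_of_lt (a := γ) (c := 1) (by simpa using hγ) one_pos
    refine Integrable.mono' h1 ?_ ?_
    · refine AEStronglyMeasurable.mul ?_ (by fun_prop)
      exact (by fun_prop : Measurable fun u : ℝ => ((u ^ γ : ℝ) : ℂ)).aestronglyMeasurable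
    · refine (ae_restrict_iff' measurableSet_Ioi).2 (Eventually.of_forall fun u hu => ?_)
      have hu0 : (1 : ℝ) < u := hu
      rw [norm_mul, norm_cexp_I_mul, Complex.norm_real,
        Real.norm_of_nonneg (by positivity), mul_one]
  | succ k ih =>
    intro γ hγ
    obtain ⟨L, hL⟩ := ih (γ - 1) (by push_cast at hγ; linarith)
    have hc1 : Tendsto (fun ε : ℝ => Complex.I * b - ε) (𝓝[>] 0) (𝓝 (Complex.I * b - (0 : ℝ))) := by
      have : Continuous fun ε : ℝ => Complex.I * b - (ε : ℂ) := by fun_prop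
      exact (this.tendsto 0).mono_left nhdsWithin_le_nhds
    refine ⟨_, Tendsto.congr' ?_ ((((Complex.continuous_exp.tendsto _).comp hc1).neg.sub
      (hL.const_mul (γ : ℂ))).div hc1 (by simpa using hb))⟩
    filter_upwards [self_mem_nhdsWithin] with ε hε
    exact (osc_ibp b hb γ hε).symm

lemma mellin_exists (b : ℝ) (hb : b ≠ 0) (g : ℝ → ℂ) (hg : Continuous g) (β : ℝ) (hβ : 0 < β)
    (c : ℕ → ℂ)
    (hh : ∀ N : ℕ,
      (fun u : ℝ => g u - Complex.exp (Complex.I * b * u) *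
          ∑ r ∈ Finset.range N, c r * ((u ^ (-(r : ℝ) - β) : ℝ) : ℂ))
        =O[atTop] fun u => u ^ (-(N : ℝ) - β)) (s : ℕ) :
    ∃ L : ℂ, Tendsto (fun ε : ℝ => ∫ u in Ioi (0 : ℝ),
              ((u ^ s : ℝ) : ℂ) * g u * ((Real.exp (-ε * u) : ℝ) : ℂ))
            (𝓝[>] 0) (𝓝 L) := by
  set N := s + 2 with hN
  set R : ℝ → ℂ := fun u => ((u ^ s : ℝ) : ℂ) * (g u - Complex.exp (Complex.I * b * u) *
          ∑ r ∈ Finset.range N, c r * ((u ^ (-(r : ℝ) - β) : ℝ) : ℂ)) with hR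
  have hRi : IntegrableOn R (Ioi 1) := by
    have hO : R =O[atTop] fun u : ℝ => u ^ (-2 - β) := by
      have h1 : (fun u : ℝ => ((u ^ s : ℝ) : ℂ)) =O[atTop] fun u : ℝ => u ^ s :=
        IsBigO.of_norm_left (by simpa using (isBigO_refl (fun u : ℝ => u ^ s) atTop).norm_left)
      refine (h1.mul (hh N)).trans_eventuallyEq ?_
      filter_upwards [eventually_gt_atTop 0] with u hu
      rw [← Real.rpow_natCast, ← Real.rpow_add hu]
      congr 1; rw [hN]; push_cast; ring
    have hloc : LocallyIntegrableOn R (Ici 1) := by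
      refine ContinuousOn.locallyIntegrableOn ?_ measurableSet_Ici
      refine ContinuousOn.mul (by fun_prop) (ContinuousOn.sub hg.continuousOn
        (ContinuousOn.mul (by fun_prop) ?_))
      refine continuousOn_finsetSum _ fun r _ => continuousOn_const.mul ?_
      refine Complex.continuous_ofReal.comp_continuousOn ?_
      exact continuousOn_id.rpow_const fun x hx => Or.inl (by
        have : (1 : ℝ) ≤ x := hx
        simp; linarith)
    exact (hloc.integrableOn_of_isBigO_atTop hO ⟨Ioi 1, Ioi_mem_atTop 1,
      integrableOn_Ioi_rpow_of_lt (by linarith) one_pos⟩).mono_set Ioi_subset_Ici_self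
  have hAi : IntegrableOn (fun u : ℝ => ((u ^ s : ℝ) : ℂ) * g u) (Ioc 0 1) := by
    have : Continuous (fun u : ℝ => ((u ^ s : ℝ) : ℂ) * g u) := by fun_prop
    exact (this.integrableOn_Icc (a := 0) (b := 1)).mono_set Ioc_subset_Icc_self
  have hosc : ∀ r : ℕ, ∃ L : ℂ, Tendsto (fun ε : ℝ => ∫ u in Ioi (1 : ℝ),
      ((u ^ ((s : ℝ) - r - β) : ℝ) : ℂ) *
      Complex.exp (Complex.I * b * u) * ((Real.exp (-ε * u) : ℝ) : ℂ)) (𝓝[>] 0) (𝓝 L) := by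
    intro r
    refine osc_tendsto b hb (s + 2) _ ?_
    have : (0 : ℝ) ≤ r := by positivity
    push_cast; linarith
  choose L hL using hosc
  refine ⟨_, Tendsto.congr' ?_ (((abel_tendsto measurableSet_Ioc Ioc_subset_Ioi_self hAi).add
    (abel_tendsto measurableSet_Ioi (Ioi_subset_Ioi zero_le_one) hRi)).add
    (tendsto_finsetSum (Finset.range N) fun r _ => (hL r).const_mul (c r)))⟩
  filter_upwards [self_mem_nhdsWithin] with ε hε
  have hε : 0 < ε := hε
  have e1 := abel_integrableOn measurableSet_Ioc Ioc_subset_Ioi_self hAi hε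
  have e2 := abel_integrableOn measurableSet_Ioi (Ioi_subset_Ioi zero_le_one) hRi hε
  have e3 : ∀ r : ℕ, r ∈ Finset.range N → IntegrableOn (fun u : ℝ => c r *
    (((u ^ ((s : ℝ) - r - β) : ℝ) : ℂ) * Complex.exp (Complex.I * b * u) *
      ((Real.exp (-ε * u) : ℝ) : ℂ))) (Ioi 1) :=
    fun r _ => (osc_integrableOn b ((s : ℝ) - r - β) hε).const_mul (c r)
  have e4 : IntegrableOn (fun u : ℝ => ∑ r ∈ Finset.range N, c r *
    (((u ^ ((s : ℝ) - r - β) : ℝ) : ℂ) * Complex.exp (Complex.I * b * u) *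
      ((Real.exp (-ε * u) : ℝ) : ℂ))) (Ioi 1) := integrable_finsetSum _ e3
  have heq : EqOn (fun u : ℝ => R u * ((Real.exp (-ε * u) : ℝ) : ℂ) +
      ∑ r ∈ Finset.range N, c r *
    (((u ^ ((s : ℝ) - r - β) : ℝ) : ℂ) * Complex.exp (Complex.I * b * u) *
      ((Real.exp (-ε * u) : ℝ) : ℂ)))
      (fun u => ((u ^ s : ℝ) : ℂ) * g u * ((Real.exp (-ε * u) : ℝ) : ℂ)) (Ioi 1) := by
    intro u hu
    have hu0 : (0 : ℝ) < u := lt_trans one_pos hu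
    have : ∀ r : ℕ, ((u ^ ((s : ℝ) - r - β) : ℝ) : ℂ) =
        ((u ^ s : ℝ) : ℂ) * ((u ^ (-(r : ℝ) - β) : ℝ) : ℂ) := by
      intro r
      rw [← Complex.ofReal_mul, ← Real.rpow_natCast, ← Real.rpow_add hu0]
      congr 2; ring
    simp only [hR, this]
    have : ∑ r ∈ Finset.range N, c r * (((u ^ s : ℝ) : ℂ) * ((u ^ (-(r : ℝ) - β) : ℝ) : ℂ) *
        Complex.exp (Complex.I * b * u) * ((Real.exp (-ε * u) : ℝ) : ℂ)) =
        ((u ^ s : ℝ) : ℂ) * Complex.exp (Complex.I * b * u) * ((Real.exp (-ε * u) : ℝ) : ℂ) *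
        ∑ r ∈ Finset.range N, c r * ((u ^ (-(r : ℝ) - β) : ℝ) : ℂ) := by
      rw [Finset.mul_sum]
      exact Finset.sum_congr rfl fun r _ => by ring
    rw [this]; ring
  rw [← Ioc_union_Ioi_eq_Ioi (zero_le_one (α := ℝ)), setIntegral_union (Ioc_disjoint_Ioi le_rfl)
    measurableSet_Ioi e1 ((e2.add e4).congr_fun heq measurableSet_Ioi), add_assoc]
  congr 1
  rw [← setIntegral_congr_fun measurableSet_Ioi heq, integral_add e2 e4,
    integral_finsetSum _ e3]
  simp only [integral_const_mul]

lemma delta_tendsto (φ g : ℝ → ℂ) (hφ : Integrable φ) (hg : Continuous g) (C : ℝ)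
    (hC : ∀ u, ‖g u‖ ≤ C) (n : ℕ) (d M : ℕ → ℂ)
    (hM : ∀ s < n, Tendsto (fun ε : ℝ => ∫ u in Ioi (0 : ℝ),
              ((u ^ s : ℝ) : ℂ) * g u * ((Real.exp (-ε * u) : ℝ) : ℂ))
            (𝓝[>] 0) (𝓝 (M s))) (a : ℝ) (ha : 0 < a) :
    Tendsto (fun ε : ℝ => ∫ u in Ioi (0 : ℝ),
      (φ u - ∑ s ∈ Finset.range n, d s * (u : ℂ) ^ s) * g (u / a) *
        ((Real.exp (-ε * u) : ℝ) : ℂ)) (𝓝[>] 0)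
      (𝓝 ((∫ u in Ioi (0 : ℝ), φ u * g (u / a)) -
        ∑ s ∈ Finset.range n, d s * ((a : ℂ) ^ (s + 1) * M s))) := by
  have hga : Continuous fun u => g (u / a) := by fun_prop
  have hA : Integrable fun u => φ u * g (u / a) :=
    hφ.mul_bdd (c := C) hga.aestronglyMeasurable (Eventually.of_forall fun u => hC _)
  have hscale : ∀ s < n, Tendsto (fun ε : ℝ => ∫ u in Ioi (0 : ℝ),
      ((u : ℂ) ^ s) * g (u / a) * ((Real.exp (-ε * u) : ℝ) : ℂ)) (𝓝[>] 0)
      (𝓝 ((a : ℂ) ^ (s + 1) * M s)) := by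
    intro s hs
    have t1 : Tendsto (fun ε : ℝ => ε * a) (𝓝[>] 0) (𝓝[>] 0) := by
      refine tendsto_nhdsWithin_iff.2 ⟨?_, ?_⟩
      · have : Continuous fun ε : ℝ => ε * a := by fun_prop
        simpa using (this.tendsto 0).mono_left (nhdsWithin_le_nhds (s := Ioi 0))
      · filter_upwards [self_mem_nhdsWithin] with ε hε
        exact mul_pos hε ha
    refine Tendsto.congr (fun ε => ?_) (((hM s hs).comp t1).const_mul ((a : ℂ) ^ (s + 1)))
    have := integral_comp_mul_right_Ioi (fun u : ℝ => ((u : ℂ) ^ s) * g (u / a) *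
      ((Real.exp (-ε * u) : ℝ) : ℂ)) 0 ha
    rw [zero_mul] at this
    have h2 : (∫ u in Ioi (0 : ℝ), ((u : ℂ) ^ s) * g (u / a) * ((Real.exp (-ε * u) : ℝ) : ℂ)) =
      (a : ℂ) * ∫ u in Ioi (0 : ℝ), (((u * a : ℝ) : ℂ) ^ s) * g (u * a / a) *
        ((Real.exp (-ε * (u * a)) : ℝ) : ℂ) := by
      rw [this, Complex.real_smul, Complex.ofReal_inv, mul_inv_cancel_left₀]
      exact_mod_cast ha.ne'
    rw [h2, pow_succ', mul_assoc, Function.comp, ← integral_const_mul]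
    congr 2
    funext u
    rw [mul_div_cancel_right₀ _ ha.ne']
    have : -ε * (u * a) = -(ε * a) * u := by ring
    rw [this]; push_cast; ring
  refine Tendsto.congr' ?_ ((abel_tendsto measurableSet_Ioi subset_rfl hA.integrableOn).sub
    (tendsto_finsetSum (Finset.range n) fun s hs =>
      (hscale s (Finset.mem_range.1 hs)).const_mul (d s)))
  filter_upwards [self_mem_nhdsWithin] with ε hε
  have hε : 0 < ε := hε
  have e1 := abel_integrableOn measurableSet_Ioi subset_rfl hA.integrableOn hε
  have e3 : ∀ s : ℕ, s ∈ Finset.range n → IntegrableOn (fun u : ℝ => d s *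
      (((u : ℂ) ^ s) * g (u / a) * ((Real.exp (-ε * u) : ℝ) : ℂ))) (Ioi 0) := by
    intro s _
    refine Integrable.const_mul ?_ _
    have h1 := integrableOn_rpow_mul_exp_neg_mul_rpow (p := 1) (s := s) (b := ε)
      (by have : (0 : ℝ) ≤ s := by positivity
          linarith) one_pos hε
    refine Integrable.mono' (h1.const_mul C) (by fun_prop) ?_
    refine (ae_restrict_iff' measurableSet_Ioi).2 (Eventually.of_forall fun u hu => ?_)
    have hu0 : (0 : ℝ) < u := hu
    rw [norm_mul, norm_mul, norm_pow, Complex.norm_real, Complex.norm_real,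
      Real.norm_of_nonneg hu0.le, Real.norm_of_nonneg (Real.exp_pos _).le, Real.rpow_one,
      Real.rpow_natCast]
    have := mul_le_mul_of_nonneg_left (hC (u / a))
      (by positivity : 0 ≤ u ^ s * Real.exp (-ε * u))
    linarith
  simp only [← integral_const_mul]
  rw [← integral_finsetSum _ e3, ← integral_sub e1 (integrable_finsetSum _ e3)]
  congr 1
  funext u
  rw [sub_mul, sub_mul, Finset.sum_mul, Finset.sum_mul]
  congr 1
  exact Finset.sum_congr rfl fun s _ => by ring

lemma fourierInt_morlet (u₀ u : ℝ) : fourierInt (morlet u₀) u = morletHat u₀ u := by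
  have := integral_cexp_quadratic (b := -(1 / 2)) (by norm_num) (Complex.I * (u₀ - u)) 0
  have e : fourierInt (morlet u₀) u = ∫ (x : ℝ), Complex.exp
      (-(1 / 2) * (x : ℂ) ^ 2 + Complex.I * (u₀ - u) * x + 0) := by
    unfold fourierInt morlet
    congr 1; funext t
    rw [← Complex.exp_add]; congr 1; ring
  rw [e, this, morletHat, Complex.ofReal_mul, Real.sqrt_eq_rpow,
    Complex.ofReal_cpow (by positivity)]
  congr 1
  · congr 1 <;> push_cast <;> ring
  · push_cast; congr 1
    linear_combination ((u₀ : ℂ) - u) ^ 2 / 2 * Complex.I_sq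

lemma integrable_morletHat (u₀ : ℝ) : Integrable (morletHat u₀) := by
  have := (integrable_cexp_quadratic (b := 1 / 2) (by norm_num) (u₀ : ℂ)
    (-(u₀ : ℂ) ^ 2 / 2)).const_mul ((Real.sqrt (2 * Real.pi) : ℝ) : ℂ)
  refine this.congr (Eventually.of_forall fun u => ?_)
  simp only [morletHat]
  push_cast
  congr 2; ring

lemma morletHat_inv (u₀ x : ℝ) :
    ∫ u : ℝ, morletHat u₀ u * Complex.exp (-(Complex.I * x * u)) =
      2 * Real.pi * (starRingEnd ℂ) (morlet u₀ x) := by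
  have h := integral_cexp_quadratic (b := -(1 / 2)) (by norm_num) (u₀ - Complex.I * x)
    (-(u₀ : ℂ) ^ 2 / 2)
  have e : (∫ u : ℝ, morletHat u₀ u * Complex.exp (-(Complex.I * x * u))) =
      ((Real.sqrt (2 * Real.pi) : ℝ) : ℂ) * ∫ (u : ℝ), Complex.exp
      (-(1 / 2) * (u : ℂ) ^ 2 + (u₀ - Complex.I * x) * u + (-(u₀ : ℂ) ^ 2 / 2)) := by
    rw [← integral_const_mul]
    congr 1; funext t
    rw [morletHat, Complex.ofReal_mul, mul_assoc, Complex.ofReal_exp, ← Complex.exp_add]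
    congr 2; push_cast; ring
  have hs : ((Real.pi : ℂ) / -(-(1 / 2))) ^ (1 / 2 : ℂ) = ((Real.sqrt (2 * Real.pi) : ℝ) : ℂ) := by
    rw [Real.sqrt_eq_rpow, Complex.ofReal_cpow (by positivity)]
    congr 1 <;> push_cast <;> ring
  rw [e, h, hs, ← mul_assoc, ← Complex.ofReal_mul, Real.mul_self_sqrt (by positivity), morlet,
    ← Complex.exp_conj]
  push_cast
  congr 1
  simp
  rw [show (starRingEnd ℂ) 2 = 2 from map_ofNat _ 2]
  congr 1
  linear_combination (x : ℂ) ^ 2 / 2 * Complex.I_sq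

lemma wavelet_parseval (u₀ b : ℝ) (f : ℝ → ℂ) (hf1 : Integrable f) (a : ℝ) :
    2 * Real.pi * ∫ t : ℝ, f t * (starRingEnd ℂ) (morlet u₀ ((t - b) / a)) =
    ∫ u : ℝ, morletHat u₀ u * (Complex.exp (Complex.I * b * (u / a : ℝ)) *
      fourierInt f (u / a)) := by
  have hprod : Integrable (Function.uncurry fun (t u : ℝ) => f t * (morletHat u₀ u *
      Complex.exp (-(Complex.I * ((t - b) / a : ℝ) * u)))) (volume.prod volume) := by
    have h1 := hf1.mul_prod (integrable_morletHat u₀)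
    have h2 := h1.mul_bdd (c := 1) (g := fun z : ℝ × ℝ =>
      Complex.exp (-(Complex.I * ((z.1 - b) / a : ℝ) * z.2))) (by
        refine Continuous.aestronglyMeasurable ?_
        fun_prop) (Eventually.of_forall fun z => by
        rw [Complex.norm_exp]; simp)
    refine h2.congr (Eventually.of_forall fun z => ?_)
    simp only [Function.uncurry]; ring
  have hswap := integral_integral_swap hprod
  rw [← integral_const_mul]
  have l : ∀ t : ℝ, 2 * (Real.pi : ℂ) * (f t * (starRingEnd ℂ) (morlet u₀ ((t - b) / a))) =
      ∫ u : ℝ, f t * (morletHat u₀ u *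
      Complex.exp (-(Complex.I * ((t - b) / a : ℝ) * u))) := by
    intro t
    rw [integral_const_mul, morletHat_inv]; ring
  simp only [l]
  rw [hswap]
  congr 1; funext u
  rw [fourierInt, ← integral_const_mul, ← integral_const_mul]
  congr 1; funext t
  have : Complex.exp (-(Complex.I * ((t - b) / a : ℝ) * u)) =
    Complex.exp (Complex.I * b * (u / a : ℝ)) * Complex.exp (-(Complex.I * t * (u / a : ℝ))) := by
    rw [← Complex.exp_add]; congr 1; push_cast; ring
  rw [this]; ring

lemma fourierInt_continuous (f : ℝ → ℂ) (hf1 : Integrable f) : Continuous (fourierInt f) := by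
  refine continuous_of_dominated (bound := fun t => ‖f t‖) ?_ ?_ hf1.norm ?_
  · intro ω
    exact AEStronglyMeasurable.mul (by fun_prop) hf1.aestronglyMeasurable
  · intro ω
    refine Eventually.of_forall fun t => ?_
    rw [norm_mul, Complex.norm_exp]; simp
  · exact Eventually.of_forall fun t => by fun_prop

lemma fourierInt_bound (f : ℝ → ℂ) (ω : ℝ) : ‖fourierInt f ω‖ ≤ ∫ t, ‖f t‖ := by
  refine (norm_integral_le_integral_norm _).trans (le_of_eq ?_)
  congr 1; funext t
  rw [norm_mul, Complex.norm_exp]; simp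

/-- **Asymptotic expansion of the Morlet wavelet transform for small `a`.**
With `ψ` the Morlet wavelet (so `ψ̂(u) = √(2π) e^{−(u−u₀)²/2}`), `b ≠ 0`,
`f ∈ L¹ ∩ L²`, `h(u) = e^{ibu} f̂(u)` with `h(u) = O(|u|^ρ)` (`ρ > −1`) as `u → 0`
and the stated expansions as `u → ±∞`, then for every `n ≥ 1` the generalized Mellin
transforms `M[h₊; s+1]`, `M[h₋; s+1]` exist for `s < n`, the limit defining `δ_n(a)`
exists, and `(W_ψ f)(b,a) = (1/2π){Σ_{s<n} c_s (M[h₊;s+1] + (−1)^s M[h₋;s+1]) a^{s+1/2}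
+ δ_n(a)}` where `δ_n(a) = a^{−1/2}·(limit)`. -/
theorem morlet_wavelet_asymptotic (u₀ b : ℝ) (hb : b ≠ 0)
    (f : ℝ → ℂ) (hf1 : Integrable f) (hf2 : MemLp f 2 volume)
    (h : ℝ → ℂ) (hdef : ∀ u : ℝ, h u = Complex.exp (Complex.I * b * u) * fourierInt f u)
    (ρ : ℝ) (hρ : -1 < ρ)
    (hh0 : h =O[𝓝[≠] (0 : ℝ)] fun u => |u| ^ ρ)
    (β : ℝ) (hβ : 0 < β) (bp bm : ℕ → ℂ)
    (hhp : ∀ N : ℕ,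
      (fun u : ℝ => h u - Complex.exp (Complex.I * b * u) *
          ∑ r ∈ Finset.range N, bp r * ((u ^ (-(r : ℝ) - β) : ℝ) : ℂ))
        =O[atTop] fun u => u ^ (-(N : ℝ) - β))
    (hhm : ∀ N : ℕ,
      (fun u : ℝ => h (-u) - Complex.exp (-(Complex.I * b * u)) *
          ∑ r ∈ Finset.range N, bm r * ((u ^ (-(r : ℝ) - β) : ℝ) : ℂ))
        =O[atTop] fun u => u ^ (-(N : ℝ) - β)) :
    (∀ u : ℝ, fourierInt (morlet u₀) u = morletHat u₀ u)
    ∧ ∀ n : ℕ, 1 ≤ n →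
      ∃ Mp Mm : ℕ → ℂ,
        (∀ s : ℕ, s < n →
          Tendsto (fun ε : ℝ => ∫ u in Ioi (0 : ℝ),
              ((u ^ s : ℝ) : ℂ) * h u * ((Real.exp (-ε * u) : ℝ) : ℂ))
            (𝓝[>] 0) (𝓝 (Mp s))
          ∧ Tendsto (fun ε : ℝ => ∫ u in Ioi (0 : ℝ),
              ((u ^ s : ℝ) : ℂ) * h (-u) * ((Real.exp (-ε * u) : ℝ) : ℂ))
            (𝓝[>] 0) (𝓝 (Mm s)))
        ∧ ∀ a : ℝ, 0 < a → ∃ L : ℂ,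
            Tendsto (fun ε : ℝ =>
                (∫ u in Ioi (0 : ℝ),
                  morletHatRem u₀ n u * h (u / a) * ((Real.exp (-ε * u) : ℝ) : ℂ))
                + ∫ u in Ioi (0 : ℝ),
                  morletHatRem u₀ n (-u) * h (-u / a) * ((Real.exp (-ε * u) : ℝ) : ℂ))
              (𝓝[>] 0) (𝓝 L)
            ∧ waveletTransform (morlet u₀) f b a
              = (((2 * Real.pi)⁻¹ : ℝ) : ℂ) *
                ((∑ s ∈ Finset.range n, morletCoeff u₀ s * (Mp s + (-1 : ℂ) ^ s * Mm s) *
                    ((a ^ ((s : ℝ) + 1 / 2) : ℝ) : ℂ))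
                  + (((Real.sqrt a)⁻¹ : ℝ) : ℂ) * L) := by
  refine ⟨fourierInt_morlet u₀, fun n _ => ?_⟩
  have hcont : Continuous h := by
    have : h = fun u : ℝ => Complex.exp (Complex.I * b * u) * fourierInt f u := funext hdef
    rw [this]
    have := fourierInt_continuous f hf1
    fun_prop
  have hbd : ∀ u, ‖h u‖ ≤ ∫ t, ‖f t‖ := by
    intro u
    rw [hdef, norm_mul, norm_cexp_I_mul, one_mul]
    exact fourierInt_bound f u
  have hcontm : Continuous fun u => h (-u) := by fun_prop
  choose Mp hMp using mellin_exists b hb h hcont β hβ bp hhp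
  choose Mm hMm using mellin_exists (-b) (neg_ne_zero.2 hb) (fun u => h (-u)) hcontm β hβ bm
    (by simpa using hhm)
  refine ⟨Mp, Mm, fun s _ => ⟨hMp s, hMm s⟩, fun a ha => ?_⟩
  have hψ := integrable_morletHat u₀
  have T1 := delta_tendsto (morletHat u₀) h hψ hcont _ hbd n (morletCoeff u₀) Mp
    (fun s _ => hMp s) a ha
  have T2 := delta_tendsto (fun u => morletHat u₀ (-u)) (fun u => h (-u)) hψ.comp_neg hcontm _
    (fun u => hbd _) n (fun s => (-1) ^ s * morletCoeff u₀ s) Mm (fun s _ => hMm s) a ha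
  refine ⟨_, Tendsto.congr (fun ε => ?_) (T1.add T2), ?_⟩
  · congr 1
    congr 1; funext u
    simp only [morletHatRem]
    rw [neg_div]
    congr 3
    refine Finset.sum_congr rfl fun s _ => ?_
    push_cast
    rw [neg_pow]; ring
  · have hI : Integrable fun u => morletHat u₀ u * h (u / a) :=
      hψ.mul_bdd (c := ∫ t, ‖f t‖)
        (by fun_prop : Continuous fun u => h (u / a)).aestronglyMeasurable
        (Eventually.of_forall fun u => hbd _)
    have hsplit : (∫ u in Ioi (0 : ℝ), morletHat u₀ (-u) * h (-(u / a))) +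
        (∫ u in Ioi (0 : ℝ), morletHat u₀ u * h (u / a)) = ∫ u, morletHat u₀ u * h (u / a) := by
      rw [← intervalIntegral.integral_Iic_add_Ioi (b := 0) hI.integrableOn hI.integrableOn]
      congr 1
      have := integral_comp_neg_Ioi 0 (fun u => morletHat u₀ u * h (u / a))
      simpa [neg_div] using this
    have hP := wavelet_parseval u₀ b f hf1 a
    simp only [← hdef] at hP
    rw [← hsplit] at hP
    have hpi : (Real.pi : ℂ) ≠ 0 := by exact_mod_cast Real.pi_ne_zero
    have hpow : ∀ s : ℕ, ((a ^ ((s : ℝ) + 1 / 2) : ℝ) : ℂ) =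
        (((Real.sqrt a)⁻¹ : ℝ) : ℂ) * (a : ℂ) ^ (s + 1) := by
      intro s
      rw [← Complex.ofReal_pow, ← Complex.ofReal_mul]
      congr 1
      rw [Real.sqrt_eq_rpow, ← Real.rpow_neg ha.le, ← Real.rpow_natCast, ← Real.rpow_add ha]
      congr 1; push_cast; ring
    have hsum : ∑ s ∈ Finset.range n, morletCoeff u₀ s * (Mp s + (-1 : ℂ) ^ s * Mm s) *
          ((a ^ ((s : ℝ) + 1 / 2) : ℝ) : ℂ) = (((Real.sqrt a)⁻¹ : ℝ) : ℂ) *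
        (∑ s ∈ Finset.range n, morletCoeff u₀ s * ((a : ℂ) ^ (s + 1) * Mp s) +
        ∑ s ∈ Finset.range n, (-1) ^ s * morletCoeff u₀ s * ((a : ℂ) ^ (s + 1) * Mm s)) := by
      rw [← Finset.sum_add_distrib, Finset.mul_sum]
      refine Finset.sum_congr rfl fun s _ => ?_
      rw [hpow]; ring
    rw [hsum, waveletTransform]
    have hX : (∫ t : ℝ, f t * (starRingEnd ℂ) (morlet u₀ ((t - b) / a))) =
      (((2 * Real.pi)⁻¹ : ℝ) : ℂ) * ((∫ u in Ioi (0 : ℝ), morletHat u₀ (-u) * h (-(u / a))) +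
        (∫ u in Ioi (0 : ℝ), morletHat u₀ u * h (u / a))) := by
      rw [← hP]; push_cast; field_simp
    rw [hX]; ring
end

section
/- Let f, ψ ∈ L¹(ℝ)∩L²(ℝ), let b∈ℝ and a>0. Then the function ω ↦ e^{ibω} f̂(ω) conj(ψ̂(aω)) is integrable on ℝ and (W_ψf)(b,a) = (√a / 2π) ∫_{−∞}^{∞} e^{ibω} f̂(ω) conj(ψ̂(aω)) dω. -/
open MeasureTheory

open FourierTransform SchwartzMap in
/-- On `L¹ ∩ L²` the `L²` Fourier transform is the Fourier integral. -/
theorem fourier_toLp_ae_eq (f : ℝ → ℂ) (hf1 : Integrable f) (hf2 : MemLp f 2 volume) :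
    (𝓕 (hf2.toLp f) : Lp (α := ℝ) ℂ 2 volume) =ᵐ[volume] 𝓕 f := by
  have hc : Continuous (𝓕 f) :=
    VectorFourier.fourierIntegral_continuous Real.continuous_fourierChar
      (L := innerₗ ℝ) continuous_inner hf1
  refine ae_eq_of_integral_contDiff_smul_eq
    ((Lp.memLp _).locallyIntegrable (by norm_num)) hc.locallyIntegrable ?_
  intro g hg1 hg2
  have h2 : HasCompactSupport (fun x => (g x : ℂ)) := hg2.comp_left (g := fun x : ℝ => (x : ℂ)) rfl
  let G : 𝓢(ℝ, ℂ) := h2.toSchwartzMap (Complex.ofRealCLM.contDiff.comp hg1)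
  have hG : ∀ x, G x = (g x : ℂ) := fun x => rfl
  have key := congrArg (fun T => T G) (Lp.fourier_toTemperedDistribution_eq (hf2.toLp f))
  simp only [TemperedDistribution.fourier_apply, Lp.toTemperedDistribution_apply] at key
  have e1 : ∫ x, g x • (𝓕 (hf2.toLp f) : Lp (α := ℝ) ℂ 2 volume) x
      = ∫ x, G x • (𝓕 (hf2.toLp f) : Lp (α := ℝ) ℂ 2 volume) x := by
    simp [hG]
  have e2 : ∫ x, g x • 𝓕 f x = ∫ x, G x • 𝓕 f x := by
    simp [hG]
  rw [e1, e2, ← key]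
  have e3 : ∫ x, (𝓕 G) x • (hf2.toLp f) x = ∫ x, (𝓕 G) x • f x := by
    refine integral_congr_ae ?_
    filter_upwards [hf2.coeFn_toLp] with x hx
    rw [hx]
  rw [e3]
  have := VectorFourier.integral_fourierIntegral_smul_eq_flip (L := innerₗ ℝ) (μ := volume)
    (ν := volume) Real.continuous_fourierChar continuous_inner G.integrable hf1
  rw [flip_innerₗ] at this
  exact this

open FourierTransform in
theorem parseval_L1L2 (f g : ℝ → ℂ) (hf1 : Integrable f) (hf2 : MemLp f 2 volume)
    (hg1 : Integrable g) (hg2 : MemLp g 2 volume) :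
    Integrable (fun x => 𝓕 f x * (starRingEnd ℂ) (𝓕 g x)) ∧
    ∫ x, 𝓕 f x * (starRingEnd ℂ) (𝓕 g x) = ∫ x, f x * (starRingEnd ℂ) (g x) := by
  have hF := fourier_toLp_ae_eq f hf1 hf2
  have hG := fourier_toLp_ae_eq g hg1 hg2
  have hFG : (fun x => inner ℂ ((𝓕 (hg2.toLp g) : Lp (α := ℝ) ℂ 2 volume) x)
      ((𝓕 (hf2.toLp f) : Lp (α := ℝ) ℂ 2 volume) x)) =ᵐ[volume]
      (fun x => 𝓕 f x * (starRingEnd ℂ) (𝓕 g x)) := by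
    filter_upwards [hF, hG] with x h1 h2
    rw [h1, h2]
    simp
  have hfg : (fun x => inner ℂ ((hg2.toLp g) x) ((hf2.toLp f) x)) =ᵐ[volume]
      (fun x => f x * (starRingEnd ℂ) (g x)) := by
    filter_upwards [hf2.coeFn_toLp, hg2.coeFn_toLp] with x h1 h2
    rw [h1, h2]
    simp
  refine ⟨(L2.integrable_inner _ _).congr hFG, ?_⟩
  rw [← integral_congr_ae hFG, ← integral_congr_ae hfg]
  exact Lp.inner_fourier_eq (hg2.toLp g) (hf2.toLp f)

open FourierTransform in
theorem fourierInt_eq (f : ℝ → ℂ) (ω : ℝ) : fourierInt f ω = 𝓕 f (ω / (2 * Real.pi)) := by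
  rw [Real.fourier_real_eq_integral_exp_smul, fourierInt]
  refine integral_congr_ae (Filter.Eventually.of_forall fun t => ?_)
  simp only [smul_eq_mul]
  congr 2
  have : (Real.pi : ℂ) ≠ 0 := by exact_mod_cast Real.pi_ne_zero
  push_cast
  field_simp

theorem fourierInt_dilate (ψ : ℝ → ℂ) (b a : ℝ) (ha : 0 < a) (ω : ℝ) :
    fourierInt (fun t => ψ ((t - b) / a)) ω
      = a * Complex.exp (-(Complex.I * b * ω)) * fourierInt ψ (a * ω) := by
  have hac : (a : ℂ) ≠ 0 := by exact_mod_cast ha.ne'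
  unfold fourierInt
  let F : ℝ → ℂ := fun s => Complex.exp (-(Complex.I * b * ω)) *
    (Complex.exp (-(Complex.I * s * (a * ω : ℝ))) * ψ s)
  have h1 : (fun t : ℝ => Complex.exp (-(Complex.I * t * ω)) * ψ ((t - b) / a))
      = fun t => F ((t - b) / a) := by
    funext t
    simp only [F]
    rw [← mul_assoc, ← Complex.exp_add]
    congr 2
    push_cast
    field_simp
    ring
  rw [h1, integral_sub_right_eq_self (fun t => F (t / a)) b, Measure.integral_comp_div,
    abs_of_pos ha]
  simp only [F]
  rw [integral_const_mul, Complex.real_smul, ← mul_assoc]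

/-- **Fourier representation of the wavelet transform.**
For `f, ψ ∈ L¹(ℝ) ∩ L²(ℝ)`, `b ∈ ℝ` and `a > 0`, the function
`ω ↦ e^{ibω} f̂(ω) conj(ψ̂(aω))` is integrable and
`(W_ψ f)(b,a) = (√a / 2π) ∫ e^{ibω} f̂(ω) conj(ψ̂(aω)) dω`. -/
theorem waveletTransform_fourier_rep (f ψ : ℝ → ℂ)
    (hf1 : Integrable f) (hf2 : MemLp f 2 volume)
    (hψ1 : Integrable ψ) (hψ2 : MemLp ψ 2 volume)
    (b a : ℝ) (ha : 0 < a) :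
    Integrable (fun ω : ℝ => Complex.exp (Complex.I * b * ω) * fourierInt f ω *
        (starRingEnd ℂ) (fourierInt ψ (a * ω)))
    ∧ waveletTransform ψ f b a
        = ((Real.sqrt a / (2 * Real.pi) : ℝ) : ℂ) *
            ∫ ω : ℝ, Complex.exp (Complex.I * b * ω) * fourierInt f ω *
              (starRingEnd ℂ) (fourierInt ψ (a * ω)) := by
  have hq : Integrable (fun t => ψ ((t - b) / a)) :=
    (hψ1.comp_div ha.ne').comp_sub_right b
  have hqm : MemLp (fun t => ψ ((t - b) / a)) 2 volume := by
    refine (memLp_two_iff_integrable_sq_norm hq.aestronglyMeasurable).2 ?_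
    have h := (memLp_two_iff_integrable_sq_norm hψ1.aestronglyMeasurable).1 hψ2
    exact (h.comp_div ha.ne').comp_sub_right b
  obtain ⟨hI, hE⟩ := parseval_L1L2 f _ hf1 hf2 hq hqm
  have hac : (a : ℂ) ≠ 0 := by exact_mod_cast ha.ne'
  have hpi : (0 : ℝ) < 2 * Real.pi := by positivity
  have hfun : (fun ω : ℝ => Complex.exp (Complex.I * b * ω) * fourierInt f ω *
        (starRingEnd ℂ) (fourierInt ψ (a * ω))) = fun ω => (a : ℂ)⁻¹ *
        (fun x => FourierTransform.fourier f x * (starRingEnd ℂ)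
          (FourierTransform.fourier (fun t => ψ ((t - b) / a)) x)) (ω / (2 * Real.pi)) := by
    funext ω
    simp only [← fourierInt_eq]
    rw [fourierInt_dilate ψ b a ha]
    simp only [map_mul, Complex.conj_ofReal, ← Complex.exp_conj, map_neg, Complex.conj_I]
    field_simp
  rw [hfun]
  refine ⟨(hI.comp_div hpi.ne').const_mul _, ?_⟩
  rw [integral_const_mul, Measure.integral_comp_div (fun x => FourierTransform.fourier f x *
    (starRingEnd ℂ) (FourierTransform.fourier (fun t => ψ ((t - b) / a)) x)), hE, abs_of_pos hpi, waveletTransform,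
    Complex.real_smul, ← mul_assoc, ← mul_assoc]
  congr 1
  have hs : (Real.sqrt a : ℂ) ≠ 0 := by exact_mod_cast (Real.sqrt_pos.2 ha).ne'
  have hp : (Real.pi : ℂ) ≠ 0 := by exact_mod_cast Real.pi_ne_zero
  have hsq : (a : ℂ) = Real.sqrt a * Real.sqrt a := by
    exact_mod_cast (Real.mul_self_sqrt ha.le).symm
  rw [hsq]
  push_cast
  field_simp
end
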